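/- arXiv:1408.3502 — 2 statements merged into one kernel-verified Lean document; each statement's English description precedes it below -/
import Mathlib

section
/- (Key inequality for quantum Jeffrey's rule.) Let {P_1,…,P_n} ⊆ M_d(ℂ) be nonzero projections with P_i·P_j = δ_ij·P_i for all i,j and P_1 + … + P_n = 1, let ψ be a positive definite density matrix, let λ_1,…,λ_n > 0 with Σ_i λ_i = 1, let φ be a positive definite density matrix with φ·P_i = P_i·φ and Re tr(φ·P_i) = λ_i for all i, and set ρ := Σ_{i=1}^n λ_i·(P_i·ψ·P_i)/(Re tr(ψ·P_i)). Then Re(tr(ψ·(log ρ − log φ))) ≥ 0, with equality if and only if φ = ρ. -/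
open Matrix
open scoped ComplexOrder

/-- Matrix logarithm: the real logarithm applied via the continuous functional calculus. -/
noncomputable def matLog {d : ℕ} (A : Matrix (Fin d) (Fin d) ℂ) : Matrix (Fin d) (Fin d) ℂ :=
  cfc Real.log A

/-- The Umegaki distance `D₀(φ,ψ) := Re (tr (ψ · (log ψ − log φ)))`. -/
noncomputable def umegakiD0 {d : ℕ} (φ ψ : Matrix (Fin d) (Fin d) ℂ) : ℝ :=
  (Matrix.trace (ψ * (matLog ψ - matLog φ))).re

/-!
For positive definite `A`, `B` with eigenvalues `α a`, `β b`, and any matrix `Q` with entries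
`W a b` in the eigenbases of `A` and `B`, the quasi-entropy
`tr (Qᴴ (A log A) Q - Qᴴ A Q log B - Qᴴ A Q + Qᴴ Q B)` equals
`∑ a, ∑ b, ‖W a b‖² β b klFun (α a / β b)`.
Hence it is nonnegative, and it vanishes exactly when `A Q = Q B`.

Let `ρ` be the Jeffrey posterior and let `φ` commute with the `P i` and satisfy
`tr (φ P i) = l i = tr (ρ P i)`. Since `log ρ - log φ` commutes with the `P i`, only the pinching
`∑ i, P i ψ P i = ∑ i, (tr (ψ P i) / l i) • P i ρ P i` of `ψ` contributes to
`tr (ψ (log ρ - log φ))`, which is therefore a positive combination of the quasi-entropies of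
`ρ` and `φ` with `Q = P i`. It vanishes iff `ρ P i = P i φ` for all `i`, that is, iff `φ = ρ`.
-/

open InformationTheory

section ResolutionOfIdentity

theorem forall_mul_eq_mul_iff_eq {ι R : Type*} [Fintype ι] [NonAssocSemiring R]
    {p : ι → R} (hp : ∑ i, p i = 1) {a b : R} (hb : ∀ i, Commute b (p i)) :
    (∀ i, a * p i = p i * b) ↔ b = a := by
  refine ⟨fun h ↦ ?_, fun h i ↦ h ▸ hb i⟩
  rw [← one_mul b, ← mul_one a, ← hp, Finset.sum_mul, Finset.mul_sum]
  exact Finset.sum_congr rfl fun i _ ↦ (h i).symm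

theorem trace_mul_mul_of_isIdempotentElem {R n : Type*} [NonUnitalCommSemiring R] [Fintype n]
    {P : Matrix n n R} (hP : IsIdempotentElem P) (A : Matrix n n R) :
    trace (P * A * P) = trace (A * P) := by
  rw [mul_assoc, trace_mul_comm, mul_assoc, hP.eq]

theorem trace_mul_eq_sum_of_commute {R n ι : Type*} [CommSemiring R] [Fintype n]
    [DecidableEq n] [Fintype ι] {P : ι → Matrix n n R} (hidem : ∀ i, IsIdempotentElem (P i))
    (hsum : ∑ i, P i = 1) (A : Matrix n n R) {X : Matrix n n R} (hX : ∀ i, Commute X (P i)) :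
    trace (A * X) = ∑ i, trace (P i * A * P i * X) := by
  have hterm i : trace (P i * A * P i * X) = trace (A * X * P i) := by
    rw [mul_assoc, ← (hX i).eq, mul_assoc (P i), ← mul_assoc A, trace_mul_comm, mul_assoc,
      (hidem i).eq]
  simp only [hterm, ← trace_sum, ← Finset.mul_sum, hsum, mul_one]

end ResolutionOfIdentity

section PosDef

variable {𝕜 m n ι : Type*} [RCLike 𝕜] [Fintype m] [Fintype n] [Fintype ι]

theorem trace_conjTranspose_mul_mul_pos {A : Matrix m m 𝕜} (hA : A.PosDef) {B : Matrix m n 𝕜}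
    (hB : B ≠ 0) : 0 < trace (Bᴴ * A * B) := by
  classical
  have hpsd := hA.posSemidef.conjTranspose_mul_mul_same B
  refine hpsd.trace_nonneg.lt_of_ne' fun htrace ↦ hB ?_
  refine ext_of_mulVec_single fun j ↦ ?_
  rw [zero_mulVec]
  by_contra hne
  have hpos := hA.dotProduct_mulVec_pos hne
  rw [star_mulVec, ← dotProduct_mulVec, mulVec_mulVec, mulVec_mulVec,
    hpsd.trace_eq_zero_iff.1 htrace] at hpos
  simp at hpos

theorem posDef_sum_conjTranspose_mul_mul {A : ι → Matrix m m 𝕜} (hA : ∀ i, (A i).PosDef)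
    {B : ι → Matrix m n 𝕜} (hB : ∀ x, (∀ i, B i *ᵥ x = 0) → x = 0) :
    (∑ i, (B i)ᴴ * A i * B i).PosDef := by
  have hpsd i : ((B i)ᴴ * A i * B i).PosSemidef := (hA i).posSemidef.conjTranspose_mul_mul_same _
  refine .of_dotProduct_mulVec_pos (posSemidef_sum _ fun i _ ↦ hpsd i).isHermitian fun x hx ↦ ?_
  obtain ⟨i, hi⟩ : ∃ i, B i *ᵥ x ≠ 0 := by
    contrapose! hx
    exact hB x hx
  rw [sum_mulVec, dotProduct_sum]
  refine Finset.sum_pos' (fun j _ ↦ (hpsd j).dotProduct_mulVec_nonneg x) ⟨i, Finset.mem_univ i, ?_⟩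
  simpa only [star_mulVec, ← dotProduct_mulVec, mulVec_mulVec, Matrix.mul_assoc]
    using (hA i).dotProduct_mulVec_pos hi

theorem re_trace_mul_pos {A P : Matrix m m 𝕜} (hA : A.PosDef) (hP : IsIdempotentElem P)
    (hPH : P.IsHermitian) (hP0 : P ≠ 0) : 0 < RCLike.re (trace (A * P)) := by
  have hpos := trace_conjTranspose_mul_mul_pos hA hP0
  rw [hPH.eq, trace_mul_mul_of_isIdempotentElem hP] at hpos
  exact (RCLike.pos_iff.1 hpos).1

end PosDef

section Eigenbases

variable {𝕜 m n : Type*} [RCLike 𝕜] [Fintype m] [DecidableEq m] [Fintype n] [DecidableEq n]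
  {A : Matrix m m 𝕜} {B : Matrix n n 𝕜}

/-- The matrix of `Q` with respect to the eigenbasis of `B` on the source and the eigenbasis of `A`
on the target; traces involving `Q` and functions of `A` and `B` are sums over its entries. -/
noncomputable def toEigenbases (hA : A.IsHermitian) (hB : B.IsHermitian) (Q : Matrix m n 𝕜) :
    Matrix m n 𝕜 :=
  (hA.eigenvectorUnitary : Matrix m m 𝕜)ᴴ * Q * (hB.eigenvectorUnitary : Matrix n n 𝕜)

theorem cfc_eq_eigenvectorUnitary_mul_diagonal_mul (hA : A.IsHermitian) (f : ℝ → ℝ) :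
    cfc f A = (hA.eigenvectorUnitary : Matrix m m 𝕜) *
      diagonal (fun a ↦ (f (hA.eigenvalues a) : 𝕜)) * (hA.eigenvectorUnitary : Matrix m m 𝕜)ᴴ :=
  hA.cfc_eq f

theorem trace_conjTranspose_mul_cfc_mul_mul_cfc (hA : A.IsHermitian) (hB : B.IsHermitian)
    (Q : Matrix m n 𝕜) (f g : ℝ → ℝ) :
    trace (Qᴴ * cfc f A * Q * cfc g B) =
      ((∑ a, ∑ b, ‖toEigenbases hA hB Q a b‖ ^ 2 *
        (f (hA.eigenvalues a) * g (hB.eigenvalues b)) : ℝ) : 𝕜) := by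
  set W := toEigenbases hA hB Q with hW
  set D := diagonal fun a ↦ (f (hA.eigenvalues a) : 𝕜)
  set E := diagonal fun b ↦ (g (hB.eigenvalues b) : 𝕜)
  have hcycle : trace (Qᴴ * cfc f A * Q * cfc g B) = trace (D * W * E * Wᴴ) := by
    rw [cfc_eq_eigenvectorUnitary_mul_diagonal_mul hA,
      cfc_eq_eigenvectorUnitary_mul_diagonal_mul hB, hW, toEigenbases]
    simp only [D, E, conjTranspose_mul, conjTranspose_conjTranspose, Matrix.mul_assoc]
    rw [← Matrix.mul_assoc Qᴴ, trace_mul_comm]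
    simp only [Matrix.mul_assoc]
  rw [hcycle]
  simp only [trace, diag_apply, mul_apply (M := D * W * E), D, E, mul_diagonal, diagonal_mul,
    conjTranspose_apply, RCLike.ofReal_sum]
  refine Finset.sum_congr rfl fun a _ ↦ Finset.sum_congr rfl fun b _ ↦ ?_
  push_cast
  rw [← RCLike.mul_conj (W a b), starRingEnd_apply]
  ring

theorem toEigenbases_injective (hA : A.IsHermitian) (hB : B.IsHermitian) :
    Function.Injective (toEigenbases hA hB) := by
  refine Function.LeftInverse.injective (g := fun W ↦
    (hA.eigenvectorUnitary : Matrix m m 𝕜) * W * (hB.eigenvectorUnitary : Matrix n n 𝕜)ᴴ) fun Q ↦ ?_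
  have hU : (hA.eigenvectorUnitary : Matrix m m 𝕜) * (hA.eigenvectorUnitary : Matrix m m 𝕜)ᴴ = 1 :=
    Unitary.coe_mul_star_self _
  have hV : (hB.eigenvectorUnitary : Matrix n n 𝕜) * (hB.eigenvectorUnitary : Matrix n n 𝕜)ᴴ = 1 :=
    Unitary.coe_mul_star_self _
  simp only [toEigenbases, Matrix.mul_assoc, hV, Matrix.mul_one]
  rw [← Matrix.mul_assoc, hU, Matrix.one_mul]

theorem conjTranspose_eigenvectorUnitary_mul (hA : A.IsHermitian) :
    (hA.eigenvectorUnitary : Matrix m m 𝕜)ᴴ * A =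
      diagonal (fun a ↦ (hA.eigenvalues a : 𝕜)) * (hA.eigenvectorUnitary : Matrix m m 𝕜)ᴴ := by
  have hU : (hA.eigenvectorUnitary : Matrix m m 𝕜)ᴴ * (hA.eigenvectorUnitary : Matrix m m 𝕜) = 1 :=
    Unitary.coe_star_mul_self _
  refine (congrArg _ hA.spectral_theorem).trans ?_
  rw [Unitary.conjStarAlgAut_apply, ← mul_assoc, ← mul_assoc, hU, one_mul]
  rfl

theorem mul_eigenvectorUnitary (hA : A.IsHermitian) :
    A * (hA.eigenvectorUnitary : Matrix m m 𝕜) =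
      (hA.eigenvectorUnitary : Matrix m m 𝕜) * diagonal (fun a ↦ (hA.eigenvalues a : 𝕜)) := by
  refine conjTranspose_injective ?_
  rw [conjTranspose_mul, hA.eq, conjTranspose_eigenvectorUnitary_mul, conjTranspose_mul,
    diagonal_conjTranspose]
  simp [Pi.star_def]

theorem toEigenbases_mul_left_apply (hA : A.IsHermitian) (hB : B.IsHermitian) (Q : Matrix m n 𝕜)
    (a : m) (b : n) :
    toEigenbases hA hB (A * Q) a b = hA.eigenvalues a * toEigenbases hA hB Q a b := by
  rw [toEigenbases, ← Matrix.mul_assoc, conjTranspose_eigenvectorUnitary_mul, Matrix.mul_assoc,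
    Matrix.mul_assoc, diagonal_mul, ← Matrix.mul_assoc, toEigenbases]

theorem toEigenbases_mul_right_apply (hA : A.IsHermitian) (hB : B.IsHermitian) (Q : Matrix m n 𝕜)
    (a : m) (b : n) :
    toEigenbases hA hB (Q * B) a b = toEigenbases hA hB Q a b * hB.eigenvalues b := by
  rw [toEigenbases, Matrix.mul_assoc, Matrix.mul_assoc, mul_eigenvectorUnitary, ← Matrix.mul_assoc,
    ← Matrix.mul_assoc, mul_diagonal, toEigenbases]

theorem mul_eq_mul_iff_toEigenbases (hA : A.IsHermitian) (hB : B.IsHermitian) (Q : Matrix m n 𝕜) :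
    A * Q = Q * B ↔
      ∀ a b, toEigenbases hA hB Q a b = 0 ∨ hA.eigenvalues a = hB.eigenvalues b := by
  rw [← (toEigenbases_injective hA hB).eq_iff, ← Matrix.ext_iff]
  simp only [toEigenbases_mul_left_apply, toEigenbases_mul_right_apply]
  refine forall₂_congr fun a b ↦ ?_
  rw [mul_comm, mul_eq_mul_left_iff, RCLike.ofReal_inj, or_comm]

end Eigenbases

section QuasiEntropy

variable {𝕜 m n : Type*} [RCLike 𝕜] [Fintype m] [DecidableEq m] [Fintype n] [DecidableEq n]
  {A : Matrix m m 𝕜} {B : Matrix n n 𝕜}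

theorem mul_klFun_div {x y : ℝ} (hx : 0 < x) (hy : 0 < y) :
    y * klFun (x / y) = x * Real.log x - x * Real.log y - x + y := by
  rw [klFun_apply, Real.log_div hx.ne' hy.ne']
  field_simp
  ring

theorem mul_klFun_div_nonneg {x y : ℝ} (hx : 0 < x) (hy : 0 < y) : 0 ≤ y * klFun (x / y) :=
  mul_nonneg hy.le (klFun_nonneg (div_pos hx hy).le)

theorem mul_klFun_div_eq_zero_iff {x y : ℝ} (hx : 0 < x) (hy : 0 < y) :
    y * klFun (x / y) = 0 ↔ x = y := by
  rw [mul_eq_zero_iff_left hy.ne', klFun_eq_zero_iff (div_pos hx hy).le, div_eq_one_iff_eq hy.ne']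

/-- Petz's quasi-entropy of `A` and `B` with weight `Q`, for the function `klFun`. For `Q = 1` it is
the Umegaki relative entropy `tr (A (log A - log B))` minus `tr A - tr B`. The weight may be
rectangular, so `A` and `B` may have different sizes. -/
noncomputable def quasiEntropy (A : Matrix m m 𝕜) (B : Matrix n n 𝕜) (Q : Matrix m n 𝕜) : ℝ :=
  RCLike.re (trace (Qᴴ * (A * cfc Real.log A) * Q - Qᴴ * A * Q * cfc Real.log B
    - Qᴴ * A * Q + Qᴴ * Q * B))

theorem quasiEntropy_eq_sum (hA : A.PosDef) (hB : B.PosDef) (Q : Matrix m n 𝕜) :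
    quasiEntropy A B Q = ∑ a, ∑ b, ‖toEigenbases hA.1 hB.1 Q a b‖ ^ 2 *
      (hB.1.eigenvalues b * klFun (hA.1.eigenvalues a / hB.1.eigenvalues b)) := by
  have hA' : IsSelfAdjoint A := hA.1
  have hB' : IsSelfAdjoint B := hB.1
  have hAlog : A * cfc Real.log A = cfc (fun x ↦ x * Real.log x) A := by
    rw [cfc_mul (fun x ↦ x) Real.log A (by fun_prop) (A.finite_real_spectrum.continuousOn _),
      cfc_id' ℝ A]
  have trace_eq := trace_conjTranspose_mul_cfc_mul_mul_cfc hA.1 hB.1 Q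
  have h₁ := trace_eq (fun x ↦ x * Real.log x) 1
  have h₂ := trace_eq id Real.log
  have h₃ := trace_eq id 1
  have h₄ := trace_eq 1 id
  simp only [cfc_id ℝ A, cfc_id ℝ B, cfc_one ℝ A, cfc_one ℝ B, Matrix.mul_one] at h₁ h₂ h₃ h₄
  simp only [quasiEntropy, hAlog, trace_add, trace_sub, h₁, h₂, h₃, h₄, map_add, map_sub,
    RCLike.ofReal_re, ← Finset.sum_sub_distrib, ← Finset.sum_add_distrib]
  refine Finset.sum_congr rfl fun a _ ↦ Finset.sum_congr rfl fun b _ ↦ ?_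
  rw [mul_klFun_div (hA.eigenvalues_pos a) (hB.eigenvalues_pos b)]
  simp only [id, Pi.one_apply]
  ring

theorem quasiEntropy_nonneg (hA : A.PosDef) (hB : B.PosDef) (Q : Matrix m n 𝕜) :
    0 ≤ quasiEntropy A B Q := by
  rw [quasiEntropy_eq_sum hA hB]
  exact Finset.sum_nonneg fun a _ ↦ Finset.sum_nonneg fun b _ ↦ mul_nonneg (sq_nonneg _)
    (mul_klFun_div_nonneg (hA.eigenvalues_pos a) (hB.eigenvalues_pos b))

theorem quasiEntropy_eq_zero_iff (hA : A.PosDef) (hB : B.PosDef) (Q : Matrix m n 𝕜) :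
    quasiEntropy A B Q = 0 ↔ A * Q = Q * B := by
  have hterm a b := mul_nonneg (sq_nonneg ‖toEigenbases hA.1 hB.1 Q a b‖)
    (mul_klFun_div_nonneg (hA.eigenvalues_pos a) (hB.eigenvalues_pos b))
  rw [quasiEntropy_eq_sum hA hB, mul_eq_mul_iff_toEigenbases hA.1 hB.1,
    Fintype.sum_eq_zero_iff_of_nonneg fun a ↦ Finset.sum_nonneg fun b _ ↦ hterm a b, funext_iff]
  refine forall_congr' fun a ↦ ?_
  rw [Pi.zero_apply, Fintype.sum_eq_zero_iff_of_nonneg (hterm a), funext_iff]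
  refine forall_congr' fun b ↦ ?_
  rw [Pi.zero_apply, mul_eq_zero, sq_eq_zero_iff, norm_eq_zero,
    mul_klFun_div_eq_zero_iff (hA.eigenvalues_pos a) (hB.eigenvalues_pos b)]

theorem quasiEntropy_of_commute {A B Q : Matrix n n 𝕜} (hA : A.IsHermitian) (hQ : Commute A Q) :
    quasiEntropy A B Q =
      RCLike.re (trace (Qᴴ * A * Q * (cfc Real.log A - cfc Real.log B)))
        - RCLike.re (trace (Qᴴ * A * Q)) + RCLike.re (trace (Qᴴ * Q * B)) := by
  have hlog : cfc Real.log A * Q = Q * cfc Real.log A :=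
    (IsSelfAdjoint.commute_cfc (a := A) hA hQ Real.log).eq
  simp only [quasiEntropy, trace_add, trace_sub, map_add, map_sub, mul_sub, mul_assoc, hlog]

end QuasiEntropy

section Jeffrey

variable {𝕜 n ι : Type*} [RCLike 𝕜] [Fintype n] [DecidableEq n] [Fintype ι]
  {P : ι → Matrix n n 𝕜} {l : ι → ℝ} {ψ φ : Matrix n n 𝕜}

/-- The quantum Jeffrey posterior: the prior `ψ` is pinched by the projections `P i`, and each block
is rescaled to have trace `l i`. -/
noncomputable def jeffreyPosterior (P : ι → Matrix n n 𝕜) (l : ι → ℝ) (ψ : Matrix n n 𝕜) :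
    Matrix n n 𝕜 :=
  ∑ i, (l i / RCLike.re (trace (ψ * P i))) • (P i * ψ * P i)

theorem mul_jeffreyPosterior (hP : OrthogonalIdempotents P) (i : ι) :
    P i * jeffreyPosterior P l ψ = (l i / RCLike.re (trace (ψ * P i))) • (P i * ψ * P i) := by
  classical
  simp [jeffreyPosterior, Finset.mul_sum, ← mul_assoc, hP.mul_eq]

theorem jeffreyPosterior_mul (hP : OrthogonalIdempotents P) (i : ι) :
    jeffreyPosterior P l ψ * P i = (l i / RCLike.re (trace (ψ * P i))) • (P i * ψ * P i) := by
  classical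
  simp [jeffreyPosterior, Finset.sum_mul, mul_assoc, hP.mul_eq]

theorem commute_jeffreyPosterior (hP : OrthogonalIdempotents P) (i : ι) :
    Commute (jeffreyPosterior P l ψ) (P i) :=
  (jeffreyPosterior_mul hP i).trans (mul_jeffreyPosterior hP i).symm

theorem re_trace_jeffreyPosterior_mul (hP : OrthogonalIdempotents P) {i : ι}
    (hi : RCLike.re (trace (ψ * P i)) ≠ 0) :
    RCLike.re (trace (jeffreyPosterior P l ψ * P i)) = l i := by
  rw [jeffreyPosterior_mul hP, trace_smul, RCLike.smul_re,
    trace_mul_mul_of_isIdempotentElem (hP.idem i), div_mul_cancel₀ _ hi]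

theorem posDef_jeffreyPosterior (hsum : ∑ i, P i = 1) (hPH : ∀ i, (P i).IsHermitian) (hψ : ψ.PosDef)
    (hl : ∀ i, 0 < l i / RCLike.re (trace (ψ * P i))) : (jeffreyPosterior P l ψ).PosDef := by
  have hker (x : n → 𝕜) (hx : ∀ i, P i *ᵥ x = 0) : x = 0 := by
    rw [← one_mulVec x, ← hsum, sum_mulVec, Fintype.sum_eq_zero _ hx]
  have hposDef := posDef_sum_conjTranspose_mul_mul (fun i ↦ hψ.smul (hl i)) hker
  simpa only [jeffreyPosterior, (hPH _).eq, mul_smul_comm, smul_mul_assoc] using hposDef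

theorem re_trace_mul_log_jeffreyPosterior_sub_log (hP : CompleteOrthogonalIdempotents P)
    (hPH : ∀ i, (P i).IsHermitian) (hψP : ∀ i, RCLike.re (trace (ψ * P i)) ≠ 0)
    (hl : ∀ i, l i ≠ 0) (hρ : (jeffreyPosterior P l ψ).IsHermitian) (hφ : φ.IsHermitian)
    (hφP : ∀ i, Commute φ (P i)) (hφl : ∀ i, RCLike.re (trace (φ * P i)) = l i) :
    RCLike.re (trace (ψ * (cfc Real.log (jeffreyPosterior P l ψ) - cfc Real.log φ))) =
      ∑ i, RCLike.re (trace (ψ * P i)) / l i * quasiEntropy (jeffreyPosterior P l ψ) φ (P i) := by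
  set ρ := jeffreyPosterior P l ψ
  have hρP i : Commute ρ (P i) := commute_jeffreyPosterior hP.toOrthogonalIdempotents i
  have hlog i : Commute (cfc Real.log ρ - cfc Real.log φ) (P i) :=
    (IsSelfAdjoint.commute_cfc (a := ρ) hρ (hρP i) _).sub_left
      (IsSelfAdjoint.commute_cfc (a := φ) hφ (hφP i) _)
  rw [trace_mul_eq_sum_of_commute hP.idem hP.complete ψ hlog, map_sum]
  refine Finset.sum_congr rfl fun i _ ↦ ?_
  have hρl : RCLike.re (trace (ρ * P i)) = l i :=
    re_trace_jeffreyPosterior_mul hP.toOrthogonalIdempotents (hψP i)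
  have hblock : P i * ρ * P i = (l i / RCLike.re (trace (ψ * P i))) • (P i * ψ * P i) := by
    rw [mul_assoc, (hρP i).eq, ← mul_assoc, (hP.idem i).eq,
      mul_jeffreyPosterior hP.toOrthogonalIdempotents]
  rw [quasiEntropy_of_commute hρ (hρP i), (hPH i).eq, (hP.idem i).eq,
    trace_mul_mul_of_isIdempotentElem (hP.idem i), hρl, trace_mul_comm (P i) φ, hφl i,
    sub_add_cancel, hblock, smul_mul_assoc, trace_smul, RCLike.smul_re, ← mul_assoc,
    div_mul_div_cancel₀ (hl i), div_self (hψP i), one_mul]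

theorem quantum_jeffrey_key_inequality_general (hP : CompleteOrthogonalIdempotents P)
    (hPH : ∀ i, (P i).IsHermitian) (hP0 : ∀ i, P i ≠ 0) (hψ : ψ.PosDef) (hφ : φ.PosDef)
    (hφP : ∀ i, Commute φ (P i)) (hφl : ∀ i, RCLike.re (trace (φ * P i)) = l i) :
    0 ≤ RCLike.re (trace (ψ * (cfc Real.log (jeffreyPosterior P l ψ) - cfc Real.log φ))) ∧
      (RCLike.re (trace (ψ * (cfc Real.log (jeffreyPosterior P l ψ) - cfc Real.log φ))) = 0 ↔
        φ = jeffreyPosterior P l ψ) := by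
  have hψP i := re_trace_mul_pos hψ (hP.idem i) (hPH i) (hP0 i)
  have hl i : 0 < l i := hφl i ▸ re_trace_mul_pos hφ (hP.idem i) (hPH i) (hP0 i)
  have hρ := posDef_jeffreyPosterior hP.complete hPH hψ fun i ↦ div_pos (hl i) (hψP i)
  have hweight i := div_pos (hψP i) (hl i)
  have hterm i := mul_nonneg (hweight i).le (quasiEntropy_nonneg hρ hφ (P i))
  rw [re_trace_mul_log_jeffreyPosterior_sub_log hP hPH (fun i ↦ (hψP i).ne') (fun i ↦ (hl i).ne')
    hρ.1 hφ.1 hφP hφl]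
  refine ⟨Finset.sum_nonneg fun i _ ↦ hterm i, ?_⟩
  rw [Fintype.sum_eq_zero_iff_of_nonneg hterm, funext_iff,
    ← forall_mul_eq_mul_iff_eq hP.complete hφP]
  refine forall_congr' fun i ↦ ?_
  rw [Pi.zero_apply, mul_eq_zero_iff_left (hweight i).ne', quasiEntropy_eq_zero_iff hρ hφ]

end Jeffrey

/-- Key inequality for quantum Jeffrey'\''s rule: with `ρ` the quantum Jeffrey
posterior `∑ i, (l i / Re tr(ψ P i)) • (P i ψ P i)` and `φ` any positive definite density matrix
commuting with every `P i` and satisfying `Re tr(φ P i) = l i`, one has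
`Re tr(ψ (log ρ − log φ)) ≥ 0`, with equality iff `φ = ρ`. -/
theorem quantum_jeffrey_key_inequality {d n : ℕ} (hd : 1 ≤ d)
    (P : Fin n → Matrix (Fin d) (Fin d) ℂ)
    (hPne : ∀ i, P i ≠ 0)
    (hPH : ∀ i, (P i)ᴴ = P i)
    (horth : ∀ i j, P i * P j = if i = j then P i else 0)
    (hsum : ∑ i, P i = 1)
    (ψ : Matrix (Fin d) (Fin d) ℂ) (hψ : ψ.PosDef) (hψ1 : ψ.trace = 1)
    (l : Fin n → ℝ) (hl : ∀ i, 0 < l i) (hl1 : ∑ i, l i = 1)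
    (φ : Matrix (Fin d) (Fin d) ℂ) (hφ : φ.PosDef) (hφ1 : φ.trace = 1)
    (hφcomm : ∀ i, φ * P i = P i * φ)
    (hφl : ∀ i, (Matrix.trace (φ * P i)).re = l i) :
    0 ≤ (Matrix.trace (ψ *
        (matLog (∑ i, (l i / (Matrix.trace (ψ * P i)).re) • (P i * ψ * P i)) - matLog φ))).re ∧
      ((Matrix.trace (ψ *
          (matLog (∑ i, (l i / (Matrix.trace (ψ * P i)).re) • (P i * ψ * P i)) - matLog φ))).re
            = 0 ↔
        φ = ∑ i, (l i / (Matrix.trace (ψ * P i)).re) • (P i * ψ * P i)) :=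
  quantum_jeffrey_key_inequality_general
    (CompleteOrthogonalIdempotents.mk (OrthogonalIdempotents.iff_mul_eq.2 horth) hsum)
    hPH hPne hψ hφ hφcomm hφl
end

section
/- Let ψ ∈ M_d(ℂ) be positive definite, let P be a projection, and set ρ := P·ψ·P + (1−P)·ψ·(1−P), which is positive definite and hence invertible. Then Re(tr(ψ·ρ⁻¹·ψ)) ≤ 2·Re(tr(ψ)). -/
open Matrix
open scoped ComplexOrder

/-! The reflection `2P - 1` turns `ψ` into `φ = (2P - 1)ψ(2P - 1) ≥ 0`, and `2ρ = ψ + φ`, so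
`ψ ≤ 2ρ`. Inverting this and conjugating by `ψ` suggests the Loewner inequality `ψρ⁻¹ψ ≤ 2ψ`, which
a sum-of-squares identity proves without forming `ψ⁻¹`. The theorem is its trace. -/

section StarOrderedRing

variable {R : Type*} [Ring R] [PartialOrder R] [StarRing R] [StarOrderedRing R]

theorem mul_inv_mul_le_self {a : R} {u : Rˣ} (ha : 0 ≤ a) (hau : a ≤ u) :
    a * ↑u⁻¹ * a ≤ a := by
  have ha_star : star a = a := ha.star_eq
  have hu_star : star (↑u⁻¹ : R) = ↑u⁻¹ := by
    have hu : star u = u := Units.ext (ha.trans hau).star_eq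
    rw [← Units.coe_star, star_inv, hu]
  -- The Schur complement `a - a u⁻¹ a` as a sum of two conjugates of positive elements.
  have decomposition : a - a * ↑u⁻¹ * a =
      (1 - a * ↑u⁻¹) * a * star (1 - a * ↑u⁻¹) +
        (a * ↑u⁻¹) * (u - a) * star (a * ↑u⁻¹) := by
    simp only [star_sub, star_one, star_mul, ha_star, hu_star, mul_sub, sub_mul, one_mul, mul_one,
      mul_assoc, Units.inv_mul_cancel_left]
    abel
  rw [← sub_nonneg, decomposition]
  exact add_nonneg (star_right_conjugate_nonneg ha _)
    (star_right_conjugate_nonneg (sub_nonneg.mpr hau) _)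

theorem mul_inv_mul_le_smul {𝕜 : Type*} [Field 𝕜] [LinearOrder 𝕜] [IsStrictOrderedRing 𝕜]
    [Algebra 𝕜 R] [PosSMulMono 𝕜 R] {a : R} {u : Rˣ} {c : 𝕜} (hc : 0 < c) (ha : 0 ≤ a)
    (hau : a ≤ c • (u : R)) : a * ↑u⁻¹ * a ≤ c • a := by
  have key : a * ↑(Units.mk0 c hc.ne' • u)⁻¹ * a ≤ a := mul_inv_mul_le_self ha hau
  rw [← inv_smul_le_iff_of_pos hc]
  simpa [Units.smul_def, smul_inv] using key

end StarOrderedRing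

section Pinching

variable {R : Type*} [Ring R]

/-- The pinching `pap + (1 - p)a(1 - p)` of `a` by `p`. For a projection `p` this is the
block-diagonal part of `a` relative to `p` and `1 - p`; the theorem's `ρ` is `pinching P ψ`. -/
def pinching (p a : R) : R := p * a * p + (1 - p) * a * (1 - p)

theorem two_nsmul_pinching (p a : R) :
    2 • pinching p a = a + (2 * p - 1) * a * (2 * p - 1) := by
  unfold pinching
  noncomm_ring

variable [PartialOrder R] [StarRing R] [StarOrderedRing R]

theorem le_two_nsmul_pinching {p a : R} (hp : IsSelfAdjoint p) (ha : 0 ≤ a) :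
    a ≤ 2 • pinching p a := by
  have reflection_selfAdjoint : IsSelfAdjoint (2 * p - 1) := by
    rw [two_mul]
    exact (hp.add hp).sub (.one R)
  rw [two_nsmul_pinching]
  exact le_add_of_nonneg_right (reflection_selfAdjoint.conjugate_nonneg ha)

end Pinching

section Matrix

open scoped MatrixOrder

variable {n 𝕜 : Type*} [RCLike 𝕜] {A B P ψ : Matrix n n 𝕜}

theorem posDef_of_le (hA : A.PosDef) (hAB : A ≤ B) : B.PosDef := by
  simpa using hA.add_posSemidef (Matrix.le_iff.mp hAB)

variable [Fintype n]

theorem re_trace_mono (hAB : A ≤ B) : RCLike.re A.trace ≤ RCLike.re B.trace :=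
  (RCLike.le_iff_re_im.mp (OrderHomClass.mono (tracePositiveLinearMap n 𝕜 𝕜) hAB)).1

variable [DecidableEq n]

theorem posDef_pinching (hψ : ψ.PosDef) (hP : P.IsHermitian) : (pinching P ψ).PosDef := by
  have h := posDef_of_le hψ (le_two_nsmul_pinching hP hψ.posSemidef.nonneg)
  simpa [← Nat.cast_smul_eq_nsmul ℝ] using h.smul (inv_pos.mpr (zero_lt_two' ℝ))

theorem mul_inv_pinching_mul_le_two_smul (hψ : ψ.PosSemidef) (hP : P.IsHermitian)
    (hρ : IsUnit (pinching P ψ)) : ψ * (pinching P ψ)⁻¹ * ψ ≤ (2 : ℝ) • ψ := by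
  obtain ⟨u, hu⟩ := hρ
  have hle : ψ ≤ (2 : ℝ) • (u : Matrix n n 𝕜) := by
    simpa [hu, ← Nat.cast_smul_eq_nsmul ℝ] using le_two_nsmul_pinching hP hψ.nonneg
  rw [← hu, ← coe_units_inv]
  exact mul_inv_mul_le_smul two_pos hψ.nonneg hle

theorem trace_inverse_bound_general (hψ : ψ.PosSemidef) (hP : P.IsHermitian)
    (hρ : IsUnit (pinching P ψ)) :
    RCLike.re (ψ * (pinching P ψ)⁻¹ * ψ).trace ≤ 2 * RCLike.re ψ.trace := by
  simpa [trace_smul, RCLike.smul_re] using re_trace_mono (mul_inv_pinching_mul_le_two_smul hψ hP hρ)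

end Matrix

/-- For positive definite `ψ` and a projection `P`, with
`ρ := P ψ P + (1−P) ψ (1−P)` (positive definite, hence invertible), one has
`Re tr(ψ ρ⁻¹ ψ) ≤ 2 Re tr(ψ)`. -/
theorem trace_inverse_bound {d : ℕ} (hd : 1 ≤ d)
    (ψ P : Matrix (Fin d) (Fin d) ℂ)
    (hψ : ψ.PosDef)
    (hPH : Pᴴ = P) (hP2 : P * P = P) :
    (Matrix.trace (ψ * (P * ψ * P + (1 - P) * ψ * (1 - P))⁻¹ * ψ)).re ≤
      2 * (Matrix.trace ψ).re :=
  trace_inverse_bound_general hψ.posSemidef hPH (posDef_pinching hψ hPH).isUnit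
end
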